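/- Let α, ν > 0 with ν > α², let u₀ ∈ H¹(ℝ³;ℝ³) be divergence-free, let r* ∈ [−3/2, ∞) with limsup_{ρ→0⁺} ρ^{−2r*−3} ∫_{|ξ|≤ρ} |û₀(ξ)|² dξ < ∞ (no condition when r* = −3/2), and let u : [0,∞) → H¹(ℝ³;ℝ³), u(0) = u₀, satisfy: (i) t ↦ ‖u(t)‖²_{L²} + α²‖∇u(t)‖²_{L²} is locally absolutely continuous with derivative ≤ −2ν‖∇u(t)‖²_{L²} a.e.; (ii) û(ξ,t) = e^{tM(ξ)} û₀(ξ) − ∫₀ᵗ e^{(t−τ)M(ξ)} G(ξ,τ) dτ with M(ξ) = −ν|ξ|²/(1+α²|ξ|²) and |G(ξ,τ)| ≤ K|ξ|‖u(τ)‖²_{L²} for some K > 0. Then (first bootstrap step) there exist constants C₁, C₂ > 0 such that for all t > 0, ‖u(t)‖²_{L²} + α²‖∇u(t)‖²_{L²} ≤ C₁ (C₂ + t)^{−min{3/2 + r*, 1/2}}. -/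

import Mathlib

open MeasureTheory Filter Topology Metric

open Asymptotics Module Set

/-!
Schonbek's Fourier splitting. With `Λ = ν (t + C) / m`, the dissipation controls the frequencies
`|ξ| > Λ^(-1/2)` of the energy `E`, so that `m E + (t + C) E'` is at most `m` times the mass of `û`
on the ball `|ξ| ≤ Λ^(-1/2)`. On that ball Duhamel's formula and `‖u(τ)‖² ≤ E 0` give
`|û(ξ,t)| ≤ |û₀(ξ)| + K E(0) t |ξ|`. In dimension `d` the first term contributes `O(Λ^(-(d/2 + r)))`
by the decay character, the second `O(t² Λ^(-(d/2 + 1))) = O(Λ^(-(d/2 - 1)))`. Integrating the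
resulting inequality against `(t + C)^(m - 1)` transfers this rate to `E`.
-/

section WeightedEnergy

theorem mul_le_add_integral_of_ae_deriv_mul_add_le {φ ψ E D : ℝ → ℝ} {a b : ℝ} (hab : a ≤ b)
    (hφ : ContDiffOn ℝ 1 φ (uIcc a b)) (hD : IntervalIntegrable D volume a b)
    (hE : ∀ s ∈ Icc a b, E s = E a + ∫ x in a..s, D x) (hψ : IntervalIntegrable ψ volume a b)
    (h : ∀ᵐ s ∂volume.restrict (Ioc a b), deriv φ s * E s + φ s * D s ≤ ψ s) :
    φ b * E b ≤ φ a * E a + ∫ s in a..b, ψ s := by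
  let g : ℝ → ℝ := fun s => E a + ∫ x in a..s, D x
  have hgE : ∀ s ∈ Icc a b, E s = g s := hE
  have hφ_ac : AbsolutelyContinuousOnInterval φ a b := hφ.absolutelyContinuousOnInterval
  have hg_ac : AbsolutelyContinuousOnInterval g a b :=
    contDiffOn_const.absolutelyContinuousOnInterval.add
      (hD.absolutelyContinuousOnInterval_intervalIntegral left_mem_uIcc)
  have hg_deriv : ∀ᵐ s, s ∈ uIcc a b → deriv g s = D s := by
    filter_upwards [hD.ae_hasDerivAt_integral] with s hs hs_mem
    exact ((hs hs_mem a left_mem_uIcc).const_add (E a)).deriv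
  have h_int : IntervalIntegrable (fun s => deriv φ s * g s + φ s * deriv g s) volume a b :=
    (hφ_ac.intervalIntegrable_deriv.mul_continuousOn hg_ac.continuousOn).add
      (hg_ac.intervalIntegrable_deriv.continuousOn_mul hφ_ac.continuousOn)
  have h_mono : ∫ s in a..b, (deriv φ s * g s + φ s * deriv g s) ≤ ∫ s in a..b, ψ s := by
    refine intervalIntegral.integral_mono_ae_restrict hab h_int hψ ?_
    rw [Measure.restrict_congr_set Ioc_ae_eq_Icc.symm]
    filter_upwards [h, ae_restrict_of_ae hg_deriv, ae_restrict_mem measurableSet_Ioc]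
      with s hs hs_deriv hs_mem
    have hs_Icc : s ∈ Icc a b := Ioc_subset_Icc_self hs_mem
    rwa [hs_deriv (Icc_subset_uIcc hs_Icc), ← hgE s hs_Icc]
  rw [hφ_ac.integral_deriv_mul_eq_sub hg_ac, ← hgE b (right_mem_Icc.2 hab),
    ← hgE a (left_mem_Icc.2 hab)] at h_mono
  linarith

theorem le_of_ae_deriv_nonpos {E D : ℝ → ℝ} {a b : ℝ} (hab : a ≤ b)
    (hD : IntervalIntegrable D volume a b) (hE : ∀ s ∈ Icc a b, E s = E a + ∫ x in a..s, D x)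
    (h : ∀ᵐ s ∂volume.restrict (Ioc a b), D s ≤ 0) : E b ≤ E a := by
  simpa using mul_le_add_integral_of_ae_deriv_mul_add_le (φ := fun _ => 1) (ψ := fun _ => 0) hab
    contDiffOn_const hD hE intervalIntegrable_const (by simpa using h)

theorem rpow_mul_le_of_ae_mul_add_mul_deriv_le {E D : ℝ → ℝ} {m κ A C t : ℝ} (hC : 0 < C)
    (ht : 0 ≤ t) (hA : 0 ≤ A) (hκm : κ < m) (hD : IntervalIntegrable D volume 0 t)
    (hE : ∀ s ∈ Icc 0 t, E s = E 0 + ∫ x in (0 : ℝ)..s, D x)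
    (h : ∀ᵐ s ∂volume.restrict (Ioc 0 t), m * E s + (s + C) * D s ≤ A * (s + C) ^ (-κ)) :
    (t + C) ^ m * E t ≤ C ^ m * E 0 + A / (m - κ) * (t + C) ^ (m - κ) := by
  have : 0 < m - κ := sub_pos.2 hκm
  have h_pos : ∀ s ∈ uIcc 0 t, s + C ≠ 0 := fun s hs => by
    rw [uIcc_of_le ht] at hs
    linarith [hs.1]
  have h_weighted : ∀ᵐ s ∂volume.restrict (Ioc 0 t),
      deriv (fun s => (s + C) ^ m) s * E s + (s + C) ^ m * D s ≤ A * (s + C) ^ (m - κ - 1) := by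
    filter_upwards [h, ae_restrict_mem measurableSet_Ioc] with s hs hs_mem
    have hsC : 0 < s + C := by linarith [hs_mem.1]
    have h_deriv : deriv (fun s => (s + C) ^ m) s = m * (s + C) ^ (m - 1) := by
      simpa using (((hasDerivAt_id s).add_const C).rpow_const (p := m) (Or.inl hsC.ne')).deriv
    calc deriv (fun s => (s + C) ^ m) s * E s + (s + C) ^ m * D s
        = (s + C) ^ (m - 1) * (m * E s + (s + C) * D s) := by
          rw [h_deriv, Real.rpow_sub_one hsC.ne']
          field_simp
      _ ≤ (s + C) ^ (m - 1) * (A * (s + C) ^ (-κ)) := by gcongr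
      _ = A * (s + C) ^ (m - κ - 1) := by
          rw [mul_left_comm, ← Real.rpow_add hsC]
          ring_nf
  have h_integral : ∫ s in (0 : ℝ)..t, A * (s + C) ^ (m - κ - 1) ≤
      A / (m - κ) * (t + C) ^ (m - κ) := by
    rw [intervalIntegral.integral_const_mul,
      intervalIntegral.integral_comp_add_right (fun x => x ^ (m - κ - 1)),
      integral_rpow (Or.inl (by linarith)), sub_add_cancel, zero_add, ← mul_div_assoc,
      div_mul_eq_mul_div]
    gcongr
    exact sub_le_self _ (by positivity)
  have h_cont : ContinuousOn (fun s => A * (s + C) ^ (m - κ - 1)) (uIcc 0 t) :=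
    continuousOn_const.mul (ContinuousOn.rpow_const (by fun_prop) fun s hs => Or.inl (h_pos s hs))
  have h_growth := mul_le_add_integral_of_ae_deriv_mul_add_le ht
    (ContDiffOn.rpow_const_of_ne (by fun_prop) h_pos) hD hE h_cont.intervalIntegrable h_weighted
  rw [zero_add] at h_growth
  linarith

theorem le_mul_rpow_neg_of_ae_mul_add_mul_deriv_le {E D : ℝ → ℝ} {m κ A C t : ℝ} (hC : 0 < C)
    (ht : 0 ≤ t) (hA : 0 ≤ A) (hκm : κ < m) (hE₀ : 0 ≤ E 0) (hD : IntervalIntegrable D volume 0 t)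
    (hE : ∀ s ∈ Icc 0 t, E s = E 0 + ∫ x in (0 : ℝ)..s, D x)
    (h : ∀ᵐ s ∂volume.restrict (Ioc 0 t), m * E s + (s + C) * D s ≤ A * (s + C) ^ (-κ)) :
    E t ≤ (C ^ κ * E 0 + A / (m - κ)) * (t + C) ^ (-κ) := by
  have htC : 0 < t + C := by positivity
  have h_growth := rpow_mul_le_of_ae_mul_add_mul_deriv_le hC ht hA hκm hD hE h
  have h_initial : C ^ m * E 0 ≤ C ^ κ * E 0 * (t + C) ^ (m - κ) := by
    calc C ^ m * E 0 = C ^ κ * E 0 * C ^ (m - κ) := by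
          rw [mul_right_comm, ← Real.rpow_add hC, add_sub_cancel]
      _ ≤ C ^ κ * E 0 * (t + C) ^ (m - κ) := by
          gcongr
          linarith
  refine le_of_mul_le_mul_left ?_ (Real.rpow_pos_of_pos htC m)
  calc (t + C) ^ m * E t ≤ (C ^ κ * E 0 + A / (m - κ)) * (t + C) ^ (m - κ) := by linarith
    _ = (t + C) ^ m * ((C ^ κ * E 0 + A / (m - κ)) * (t + C) ^ (-κ)) := by
        rw [sub_eq_add_neg, Real.rpow_add htC]
        ring

end WeightedEnergy

section WeightedIntegrability

variable {V : Type*} [SeminormedAddCommGroup V] [MeasurableSpace V] [OpensMeasurableSpace V]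
  {μ : Measure V} {h : V → ℝ}

theorem integrable_of_one_add_norm_sq_mul (hh : Integrable (fun ξ => (1 + ‖ξ‖ ^ 2) * h ξ) μ) :
    Integrable h μ := by
  have h_cont : Continuous fun ξ : V => (1 + ‖ξ‖ ^ 2)⁻¹ :=
    Continuous.inv₀ (by fun_prop) fun ξ => by positivity
  refine (hh.bdd_mul (c := 1) h_cont.aestronglyMeasurable (ae_of_all _ fun ξ => ?_)).congr
    (ae_of_all _ fun ξ => inv_mul_cancel_left₀ (by positivity) (h ξ))
  rw [Real.norm_of_nonneg (by positivity)]
  exact inv_le_one_of_one_le₀ (by simp)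

theorem integrable_norm_sq_mul_of_one_add_norm_sq_mul
    (hh : Integrable (fun ξ => (1 + ‖ξ‖ ^ 2) * h ξ) μ) :
    Integrable (fun ξ => ‖ξ‖ ^ 2 * h ξ) μ :=
  (hh.sub (integrable_of_one_add_norm_sq_mul hh)).congr
    (ae_of_all _ fun ξ => by simp only [Pi.sub_apply]; ring)

theorem integrable_one_add_mul_norm_sq_mul (hh : Integrable (fun ξ => (1 + ‖ξ‖ ^ 2) * h ξ) μ)
    (c : ℝ) : Integrable (fun ξ => (1 + c * ‖ξ‖ ^ 2) * h ξ) μ :=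
  ((integrable_of_one_add_norm_sq_mul hh).add
    ((integrable_norm_sq_mul_of_one_add_norm_sq_mul hh).const_mul c)).congr
    (ae_of_all _ fun ξ => by simp only [Pi.add_apply]; ring)

end WeightedIntegrability

section FourierSplitting

variable {V W : Type*} [SeminormedAddCommGroup V] [MeasurableSpace V] [SeminormedAddCommGroup W]
  {μ : Measure V} {α : ℝ} {f : V → W}

/-- The squared `H¹_α` norm `‖u‖² + α²‖∇u‖²` of a field `u`, expressed through its Fourier
transform `f` by Plancherel. -/
noncomputable def voigtEnergy (μ : Measure V) (α : ℝ) (f : V → W) : ℝ :=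
  ∫ ξ, (1 + α ^ 2 * ‖ξ‖ ^ 2) * ‖f ξ‖ ^ 2 ∂μ

theorem voigtEnergy_nonneg : 0 ≤ voigtEnergy μ α f :=
  integral_nonneg fun ξ => by positivity

theorem voigtEnergy_le_voigtEnergy_zero {ν t : ℝ} {U : ℝ → V → W} {D : ℝ → ℝ}
    (hν : 0 ≤ ν) (ht : 0 ≤ t) (hD : IntervalIntegrable D volume 0 t)
    (hE : ∀ s, 0 ≤ s → voigtEnergy μ α (U s) = voigtEnergy μ α (U 0) + ∫ x in (0 : ℝ)..s, D x)
    (hDν : ∀ᵐ s ∂volume.restrict (Ioi 0), D s ≤ -(2 * ν) * ∫ ξ, ‖ξ‖ ^ 2 * ‖U s ξ‖ ^ 2 ∂μ) :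
    voigtEnergy μ α (U t) ≤ voigtEnergy μ α (U 0) := by
  refine le_of_ae_deriv_nonpos (E := fun s => voigtEnergy μ α (U s)) ht hD
    (fun s hs => hE s hs.1) ?_
  filter_upwards [ae_restrict_of_ae_restrict_of_subset Ioc_subset_Ioi_self hDν] with s hs
  exact hs.trans (mul_nonpos_of_nonpos_of_nonneg (by linarith)
    (integral_nonneg fun ξ => by positivity))

variable [OpensMeasurableSpace V]

theorem integral_norm_sq_le_voigtEnergy
    (hf : Integrable (fun ξ => (1 + ‖ξ‖ ^ 2) * ‖f ξ‖ ^ 2) μ) :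
    ∫ ξ, ‖f ξ‖ ^ 2 ∂μ ≤ voigtEnergy μ α f :=
  integral_mono (integrable_of_one_add_norm_sq_mul hf) (integrable_one_add_mul_norm_sq_mul hf _)
    fun ξ => le_mul_of_one_le_left (by positivity) (le_add_of_nonneg_right (by positivity))

theorem voigtEnergy_le_dirichlet_add_lowFrequency {Λ ρ : ℝ} (hαΛ : α ^ 2 ≤ Λ)
    (hρ : 0 ≤ ρ) (hΛρ : 1 ≤ Λ * ρ ^ 2)
    (hf : Integrable (fun ξ => (1 + ‖ξ‖ ^ 2) * ‖f ξ‖ ^ 2) μ) :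
    voigtEnergy μ α f ≤
      2 * Λ * ∫ ξ, ‖ξ‖ ^ 2 * ‖f ξ‖ ^ 2 ∂μ + ∫ ξ in closedBall 0 ρ, ‖f ξ‖ ^ 2 ∂μ := by
  have hΛ : 0 ≤ Λ := (sq_nonneg α).trans hαΛ
  have h_ball := (integrable_of_one_add_norm_sq_mul hf).indicator
    (measurableSet_closedBall (x := (0 : V)) (ε := ρ))
  have h_grad := (integrable_norm_sq_mul_of_one_add_norm_sq_mul hf).const_mul (2 * Λ)
  rw [← integral_indicator measurableSet_closedBall, ← integral_const_mul,
    ← integral_add h_grad h_ball]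
  refine integral_mono (integrable_one_add_mul_norm_sq_mul hf _) (h_grad.add h_ball) fun ξ => ?_
  have hαξ : α ^ 2 * ‖ξ‖ ^ 2 ≤ Λ * ‖ξ‖ ^ 2 := by gcongr
  by_cases hξ : ξ ∈ closedBall 0 ρ
  · have h_weight : 1 + α ^ 2 * ‖ξ‖ ^ 2 ≤ 2 * Λ * ‖ξ‖ ^ 2 + 1 := by
      linarith [mul_nonneg hΛ (sq_nonneg ‖ξ‖)]
    simp only [indicator_of_mem hξ]
    linarith [mul_le_mul_of_nonneg_right h_weight (sq_nonneg ‖f ξ‖)]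
  · have hρξ : ρ ≤ ‖ξ‖ := by simpa using (not_le.1 (mem_closedBall.not.1 hξ)).le
    have h_high : 1 ≤ Λ * ‖ξ‖ ^ 2 := hΛρ.trans (by gcongr)
    have h_weight : 1 + α ^ 2 * ‖ξ‖ ^ 2 ≤ 2 * Λ * ‖ξ‖ ^ 2 := by linarith
    simp only [indicator_of_notMem hξ, add_zero]
    linarith [mul_le_mul_of_nonneg_right h_weight (sq_nonneg ‖f ξ‖)]

theorem mul_voigtEnergy_add_mul_le {ν m y δ : ℝ} (hν : 0 < ν) (hm : 0 < m) (hy : 0 < y)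
    (hαy : α ^ 2 ≤ ν / m * y) (hf : Integrable (fun ξ => (1 + ‖ξ‖ ^ 2) * ‖f ξ‖ ^ 2) μ)
    (hδ : δ ≤ -(2 * ν) * ∫ ξ, ‖ξ‖ ^ 2 * ‖f ξ‖ ^ 2 ∂μ) :
    m * voigtEnergy μ α f + y * δ ≤
      m * ∫ ξ in closedBall 0 ((ν / m * y) ^ (-1 / 2 : ℝ)), ‖f ξ‖ ^ 2 ∂μ := by
  have h_radius : ν / m * y * ((ν / m * y) ^ (-1 / 2 : ℝ)) ^ 2 = 1 := by
    rw [← Real.rpow_two, ← Real.rpow_mul (by positivity), div_mul_cancel₀ _ two_ne_zero,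
      Real.rpow_neg_one, mul_inv_cancel₀ (by positivity)]
  have h_split := voigtEnergy_le_dirichlet_add_lowFrequency hαy (by positivity) h_radius.ge hf
  have h_cancel : m * (2 * (ν / m * y)) = y * (2 * ν) := by field_simp
  set X := ∫ ξ, ‖ξ‖ ^ 2 * ‖f ξ‖ ^ 2 ∂μ
  set L := ∫ ξ in closedBall 0 ((ν / m * y) ^ (-1 / 2 : ℝ)), ‖f ξ‖ ^ 2 ∂μ
  calc m * voigtEnergy μ α f + y * δ
      ≤ m * (2 * (ν / m * y) * X + L) + y * (-(2 * ν) * X) := by gcongr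
    _ = m * L := by linear_combination X * h_cancel

theorem exists_voigtEnergy_le_of_lowFrequency_le {ν m κ A : ℝ} {U : ℝ → V → W} {D : ℝ → ℝ}
    (hν : 0 < ν) (hm : 0 < m) (hκm : κ < m) (hA : 0 ≤ A)
    (hU : ∀ t, 0 ≤ t → Integrable (fun ξ => (1 + ‖ξ‖ ^ 2) * ‖U t ξ‖ ^ 2) μ)
    (hD : ∀ t, 0 ≤ t → IntervalIntegrable D volume 0 t)
    (hE : ∀ t, 0 ≤ t → voigtEnergy μ α (U t) = voigtEnergy μ α (U 0) + ∫ s in (0 : ℝ)..t, D s)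
    (hDν : ∀ᵐ s ∂volume.restrict (Ioi 0), D s ≤ -(2 * ν) * ∫ ξ, ‖ξ‖ ^ 2 * ‖U s ξ‖ ^ 2 ∂μ)
    (hA_low : ∀ᶠ Λ in atTop, ∀ t, 0 ≤ t → t ≤ m / ν * Λ →
      ∫ ξ in closedBall 0 (Λ ^ (-1 / 2 : ℝ)), ‖U t ξ‖ ^ 2 ∂μ ≤ A * Λ ^ (-κ)) :
    ∃ C₁ > 0, ∃ C₂ > 0, ∀ t, 0 ≤ t → voigtEnergy μ α (U t) ≤ C₁ * (C₂ + t) ^ (-κ) := by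
  let E : ℝ → ℝ := fun t => voigtEnergy μ α (U t)
  have hE₀ : 0 ≤ E 0 := voigtEnergy_nonneg
  have : 0 < m - κ := sub_pos.2 hκm
  obtain ⟨Λ₀, hΛ₀⟩ := eventually_atTop.1
    ((hA_low.and (eventually_ge_atTop (α ^ 2))).and (eventually_gt_atTop 0))
  set C : ℝ := m / ν * Λ₀
  have hC : 0 < C := mul_pos (by positivity) (hΛ₀ Λ₀ le_rfl).2
  refine ⟨C ^ κ * E 0 + m * A * (ν / m) ^ (-κ) / (m - κ) + 1, by positivity, C, hC,
    fun t ht => ?_⟩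
  have h_ineq : ∀ᵐ s ∂volume.restrict (Ioc 0 t),
      m * E s + (s + C) * D s ≤ m * A * (ν / m) ^ (-κ) * (s + C) ^ (-κ) := by
    filter_upwards [ae_restrict_of_ae_restrict_of_subset Ioc_subset_Ioi_self hDν,
      ae_restrict_mem measurableSet_Ioc] with s hs hs_mem
    have hs₀ : 0 ≤ s := hs_mem.1.le
    have h_inv : m / ν * (ν / m * (s + C)) = s + C := by field_simp
    have hΛ : Λ₀ ≤ ν / m * (s + C) := by
      refine le_of_mul_le_mul_left ?_ (div_pos hm hν)
      linarith
    obtain ⟨⟨h_ball, hα⟩, -⟩ := hΛ₀ _ hΛ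
    calc m * E s + (s + C) * D s
        ≤ m * ∫ ξ in closedBall 0 ((ν / m * (s + C)) ^ (-1 / 2 : ℝ)), ‖U s ξ‖ ^ 2 ∂μ :=
          mul_voigtEnergy_add_mul_le hν hm (by positivity) hα (hU s hs₀) hs
      _ ≤ m * (A * (ν / m * (s + C)) ^ (-κ)) := by
          gcongr
          exact h_ball s hs₀ (by linarith)
      _ = m * A * (ν / m) ^ (-κ) * (s + C) ^ (-κ) := by
          rw [Real.mul_rpow (by positivity) (by positivity)]
          ring
  have h_decay : E t ≤ _ := le_mul_rpow_neg_of_ae_mul_add_mul_deriv_le hC ht (by positivity)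
    hκm hE₀ (hD t ht) (fun s hs => hE s hs.1) h_ineq
  rw [add_comm C t]
  exact h_decay.trans (mul_le_mul_of_nonneg_right (lt_add_one _).le (by positivity))

end FourierSplitting

section LowFrequencies

variable {V W : Type*} [SeminormedAddCommGroup V] [MeasurableSpace V]
  [SeminormedAddCommGroup W] {μ : Measure V}

theorem setIntegral_closedBall_norm_sq_le [OpensMeasurableSpace V]
    [IsFiniteMeasureOnCompacts μ] [ProperSpace V] {f g : V → W} {B ρ : ℝ}
    (hf : Integrable (fun ξ => ‖f ξ‖ ^ 2) μ)
    (hg : Integrable (fun ξ => ‖g ξ‖ ^ 2) μ) (hB : 0 ≤ B)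
    (hfg : ∀ᵐ ξ ∂μ, ‖f ξ‖ ≤ ‖g ξ‖ + B * ‖ξ‖) :
    ∫ ξ in closedBall 0 ρ, ‖f ξ‖ ^ 2 ∂μ ≤
      2 * ∫ ξ in closedBall 0 ρ, ‖g ξ‖ ^ 2 ∂μ + 2 * (B * ρ) ^ 2 * μ.real (closedBall 0 ρ) := by
  have h_const : IntegrableOn (fun _ : V => 2 * (B * ρ) ^ 2) (closedBall 0 ρ) μ :=
    integrableOn_const measure_closedBall_lt_top.ne
  have hg_ball : IntegrableOn (fun ξ => 2 * ‖g ξ‖ ^ 2) (closedBall 0 ρ) μ :=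
    hg.integrableOn.const_mul 2
  calc ∫ ξ in closedBall 0 ρ, ‖f ξ‖ ^ 2 ∂μ
      ≤ ∫ ξ in closedBall 0 ρ, (2 * ‖g ξ‖ ^ 2 + 2 * (B * ρ) ^ 2) ∂μ := by
        refine setIntegral_mono_ae_restrict hf.integrableOn (hg_ball.add h_const) ?_
        filter_upwards [ae_restrict_of_ae hfg, ae_restrict_mem measurableSet_closedBall]
          with ξ hξ hξρ
        rw [mem_closedBall_zero_iff] at hξρ
        calc ‖f ξ‖ ^ 2 ≤ (‖g ξ‖ + B * ρ) ^ 2 := by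
              have : ‖f ξ‖ ≤ ‖g ξ‖ + B * ρ := hξ.trans (by gcongr)
              gcongr
          _ ≤ 2 * (‖g ξ‖ ^ 2 + (B * ρ) ^ 2) := add_sq_le
          _ = 2 * ‖g ξ‖ ^ 2 + 2 * (B * ρ) ^ 2 := mul_add _ _ _
    _ = _ := by
        rw [integral_add hg_ball h_const, integral_const_mul, setIntegral_const, smul_eq_mul,
          mul_comm (μ.real _)]

theorem isBigO_setIntegral_closedBall_of_decayCharacter {f : V → W} {r d : ℝ}
    (hf : Integrable (fun ξ => ‖f ξ‖ ^ 2) μ)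
    (hr : r ≠ -d / 2 → ∃ c : ℝ, ∀ᶠ ρ in 𝓝[>] (0 : ℝ),
      ρ ^ (-(2 * r) - d) * ∫ ξ in closedBall 0 ρ, ‖f ξ‖ ^ 2 ∂μ ≤ c) :
    (fun ρ => ∫ ξ in closedBall 0 ρ, ‖f ξ‖ ^ 2 ∂μ) =O[𝓝[>] 0] fun ρ => ρ ^ (2 * r + d) := by
  have h_nonneg : ∀ ρ, 0 ≤ ∫ ξ in closedBall 0 ρ, ‖f ξ‖ ^ 2 ∂μ :=
    fun ρ => integral_nonneg fun ξ => by positivity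
  by_cases h_eq : r = -d / 2
  · refine .of_bound (∫ ξ, ‖f ξ‖ ^ 2 ∂μ) (.of_forall fun ρ => ?_)
    rw [show 2 * r + d = 0 by rw [h_eq]; ring, Real.rpow_zero, norm_one, mul_one,
      Real.norm_of_nonneg (h_nonneg ρ)]
    exact setIntegral_le_integral hf (ae_of_all _ fun ξ => by positivity)
  · obtain ⟨c, hc⟩ := hr h_eq
    refine .of_bound c ?_
    filter_upwards [hc, self_mem_nhdsWithin] with ρ hρc hρ
    have hρ : 0 < ρ := hρ
    rw [Real.norm_of_nonneg (h_nonneg ρ), Real.norm_of_nonneg (by positivity)]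
    rwa [show -(2 * r) - d = -(2 * r + d) by ring, Real.rpow_neg hρ.le,
      inv_mul_le_iff₀ (by positivity), mul_comm] at hρc

theorem exists_eventually_lowFrequency_le {V W : Type*} [NormedAddCommGroup V] [NormedSpace ℝ V]
    [FiniteDimensional ℝ V] [MeasurableSpace V] [BorelSpace V] [SeminormedAddCommGroup W]
    {μ : Measure V} [μ.IsAddHaarMeasure] {F : V → W} {U : ℝ → V → W} {B r κ : ℝ} (b : ℝ)
    (hF : Integrable (fun ξ => ‖F ξ‖ ^ 2) μ)
    (hFr : (fun ρ => ∫ ξ in closedBall 0 ρ, ‖F ξ‖ ^ 2 ∂μ) =O[𝓝[>] 0]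
      fun ρ => ρ ^ (2 * r + finrank ℝ V))
    (hU : ∀ t, 0 ≤ t → Integrable (fun ξ => ‖U t ξ‖ ^ 2) μ) (hB : 0 ≤ B)
    (hUF : ∀ t, 0 ≤ t → ∀ᵐ ξ ∂μ, ‖U t ξ‖ ≤ ‖F ξ‖ + B * t * ‖ξ‖)
    (hκ : κ ≤ min (finrank ℝ V / 2 + r) (finrank ℝ V / 2 - 1)) :
    ∃ A, 0 ≤ A ∧ ∀ᶠ Λ in atTop, ∀ t, 0 ≤ t → t ≤ b * Λ →
      ∫ ξ in closedBall 0 (Λ ^ (-1 / 2 : ℝ)), ‖U t ξ‖ ^ 2 ∂μ ≤ A * Λ ^ (-κ) := by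
  obtain ⟨hκr, hκd⟩ := le_min_iff.1 hκ
  have h_radius : Tendsto (fun Λ : ℝ => Λ ^ (-1 / 2 : ℝ)) atTop (𝓝[>] 0) := by
    refine tendsto_nhdsWithin_iff.2 ⟨?_, ?_⟩
    · simpa [neg_div] using tendsto_rpow_neg_atTop (y := 1 / 2) (by norm_num)
    · filter_upwards [eventually_gt_atTop 0] with Λ hΛ
      exact Real.rpow_pos_of_pos hΛ _
  obtain ⟨c, hc, hF_le⟩ := (hFr.comp_tendsto h_radius).exists_nonneg
  refine ⟨2 * c + 2 * (B * b) ^ 2 * μ.real (ball 0 1), by positivity, ?_⟩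
  filter_upwards [hF_le.bound, eventually_ge_atTop 1] with Λ hΛF hΛ t ht htΛ
  have hΛ₀ : 0 < Λ := by positivity
  have h_linear : ∫ ξ in closedBall 0 (Λ ^ (-1 / 2 : ℝ)), ‖F ξ‖ ^ 2 ∂μ ≤ c * Λ ^ (-κ) := by
    refine ((le_abs_self _).trans hΛF).trans (mul_le_mul_of_nonneg_left ?_ hc)
    rw [Function.comp_apply, Real.norm_of_nonneg (by positivity), ← Real.rpow_mul hΛ₀.le]
    exact Real.rpow_le_rpow_of_exponent_le hΛ (by linarith)
  have h_nonlinear : (B * t * Λ ^ (-1 / 2 : ℝ)) ^ 2 * (Λ ^ (-1 / 2 : ℝ)) ^ finrank ℝ V ≤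
      (B * b) ^ 2 * Λ ^ (-κ) := by
    calc (B * t * Λ ^ (-1 / 2 : ℝ)) ^ 2 * (Λ ^ (-1 / 2 : ℝ)) ^ finrank ℝ V
        ≤ (B * (b * Λ) * Λ ^ (-1 / 2 : ℝ)) ^ 2 * (Λ ^ (-1 / 2 : ℝ)) ^ finrank ℝ V := by gcongr
      _ = (B * b) ^ 2 * Λ ^ (2 + -1 / 2 * 2 + -1 / 2 * finrank ℝ V : ℝ) := by
          rw [Real.rpow_add hΛ₀, Real.rpow_add hΛ₀, Real.rpow_mul hΛ₀.le, Real.rpow_mul hΛ₀.le,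
            Real.rpow_natCast, Real.rpow_two, Real.rpow_two]
          ring
      _ ≤ (B * b) ^ 2 * Λ ^ (-κ) := by
          gcongr
          linarith
  have h_split := setIntegral_closedBall_norm_sq_le (ρ := Λ ^ (-1 / 2 : ℝ)) (hU t ht) hF
    (mul_nonneg hB ht) (hUF t ht)
  rw [Measure.addHaar_real_closedBall μ 0 (by positivity)] at h_split
  linarith [mul_le_mul_of_nonneg_right h_nonlinear (measureReal_nonneg (μ := μ) (s := ball 0 1))]

end LowFrequencies

theorem norm_le_of_duhamel {W : Type*} [NormedAddCommGroup W] [NormedSpace ℝ W] {M t : ℝ}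
    {f f₀ : W} {g : ℝ → W} {b : ℝ → ℝ} (hM : M ≤ 0) (ht : 0 ≤ t)
    (hb : IntervalIntegrable b volume 0 t) (hgb : ∀ τ, ‖g τ‖ ≤ b τ)
    (hf : f = Real.exp (t * M) • f₀ - ∫ τ in (0 : ℝ)..t, Real.exp ((t - τ) * M) • g τ) :
    ‖f‖ ≤ ‖f₀‖ + ∫ τ in (0 : ℝ)..t, b τ := by
  have h_contract : ∀ s, 0 ≤ s → ∀ w : W, ‖Real.exp (s * M) • w‖ ≤ ‖w‖ := fun s hs w => by
    rw [norm_smul, Real.norm_of_nonneg (Real.exp_pos _).le]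
    exact mul_le_of_le_one_left (norm_nonneg w)
      (Real.exp_le_one_iff.2 (mul_nonpos_of_nonneg_of_nonpos hs hM))
  rw [hf]
  refine (norm_sub_le _ _).trans (add_le_add (h_contract t ht f₀) ?_)
  exact intervalIntegral.norm_integral_le_of_norm_le ht
    (ae_of_all _ fun τ hτ => (h_contract _ (sub_nonneg.2 hτ.2) _).trans (hgb τ)) hb

theorem voigtSymbol_nonpos {α ν x : ℝ} (hν : 0 ≤ ν) :
    -(ν * x ^ 2) / (1 + α ^ 2 * x ^ 2) ≤ 0 :=
  div_nonpos_of_nonpos_of_nonneg (neg_nonpos.2 (by positivity)) (by positivity)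

-- `hUF` is what Duhamel's formula gives for `‖G(ξ,τ)‖ ≤ K‖ξ‖‖u(τ)‖²` and a contraction `e^{tM}`.
theorem NSV_decay_first_bootstrap_general {V W : Type*} [NormedAddCommGroup V] [NormedSpace ℝ V]
    [FiniteDimensional ℝ V] [MeasurableSpace V] [BorelSpace V] [SeminormedAddCommGroup W]
    {μ : Measure V} [μ.IsAddHaarMeasure] {α ν K r κ : ℝ} {F : V → W} {U : ℝ → V → W} {D : ℝ → ℝ}
    (hν : 0 < ν) (hK : 0 ≤ K) (hF : Integrable (fun ξ => ‖F ξ‖ ^ 2) μ)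
    (hFr : (fun ρ => ∫ ξ in closedBall 0 ρ, ‖F ξ‖ ^ 2 ∂μ) =O[𝓝[>] 0]
      fun ρ => ρ ^ (2 * r + finrank ℝ V))
    (hU : ∀ t, 0 ≤ t → Integrable (fun ξ => (1 + ‖ξ‖ ^ 2) * ‖U t ξ‖ ^ 2) μ)
    (hD : ∀ t, 0 ≤ t → IntervalIntegrable D volume 0 t)
    (hE : ∀ t, 0 ≤ t → voigtEnergy μ α (U t) = voigtEnergy μ α (U 0) + ∫ s in (0 : ℝ)..t, D s)
    (hDν : ∀ᵐ s ∂volume.restrict (Ioi 0), D s ≤ -(2 * ν) * ∫ ξ, ‖ξ‖ ^ 2 * ‖U s ξ‖ ^ 2 ∂μ)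
    (hL2 : ∀ t, 0 ≤ t → IntervalIntegrable (fun τ => ∫ ξ, ‖U τ ξ‖ ^ 2 ∂μ) volume 0 t)
    (hUF : ∀ t, 0 ≤ t → ∀ᵐ ξ ∂μ,
      ‖U t ξ‖ ≤ ‖F ξ‖ + ∫ τ in (0 : ℝ)..t, K * ‖ξ‖ * ∫ η, ‖U τ η‖ ^ 2 ∂μ)
    (hκ : κ ≤ min (finrank ℝ V / 2 + r) (finrank ℝ V / 2 - 1)) :
    ∃ C₁ > 0, ∃ C₂ > 0, ∀ t, 0 ≤ t → voigtEnergy μ α (U t) ≤ C₁ * (C₂ + t) ^ (-κ) := by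
  set E₀ : ℝ := voigtEnergy μ α (U 0)
  have hE₀ : 0 ≤ E₀ := voigtEnergy_nonneg
  have h_mass : ∀ t, 0 ≤ t → ∫ ξ, ‖U t ξ‖ ^ 2 ∂μ ≤ E₀ := fun t ht =>
    (integral_norm_sq_le_voigtEnergy (hU t ht)).trans
      (voigtEnergy_le_voigtEnergy_zero hν.le ht (hD t ht) hE hDν)
  have h_low : ∀ t, 0 ≤ t → ∀ᵐ ξ ∂μ, ‖U t ξ‖ ≤ ‖F ξ‖ + K * E₀ * t * ‖ξ‖ := fun t ht => by
    have h_time : ∫ τ in (0 : ℝ)..t, ∫ η, ‖U τ η‖ ^ 2 ∂μ ≤ t * E₀ := by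
      simpa using intervalIntegral.integral_mono_on ht (hL2 t ht) intervalIntegrable_const
        fun τ hτ => h_mass τ hτ.1
    filter_upwards [hUF t ht] with ξ hξ
    refine hξ.trans (add_le_add_right ?_ _)
    rw [intervalIntegral.integral_const_mul]
    calc K * ‖ξ‖ * ∫ τ in (0 : ℝ)..t, ∫ η, ‖U τ η‖ ^ 2 ∂μ ≤ K * ‖ξ‖ * (t * E₀) := by gcongr
      _ = K * E₀ * t * ‖ξ‖ := by ring
  have hκm : κ < |κ| + 1 := (le_abs_self κ).trans_lt (lt_add_one _)
  obtain ⟨A, hA, hA_low⟩ := exists_eventually_lowFrequency_le ((|κ| + 1) / ν) hF hFr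
    (fun t ht => integrable_of_one_add_norm_sq_mul (hU t ht)) (mul_nonneg hK hE₀) h_low hκ
  exact exists_voigtEnergy_le_of_lowFrequency_le hν (by positivity) hκm hA hU hD hE hDν hA_low

/-- **Decay of weak solutions to the Navier–Stokes–Voigt equations** (first bootstrap step).
Here `û₀ = F0`, `û(t) = Uhat t`, `M(ξ) = -ν|ξ|²/(1+α²|ξ|²)`, and by Plancherel
`‖u(t)‖²_{L²} + α²‖∇u(t)‖²_{L²} = ∫ (1+α²|ξ|²)‖û(ξ,t)‖² dξ`.  Hypothesis (i), the local
absolute continuity of the energy with a.e. derivative `≤ -2ν‖∇u(t)‖²_{L²}`, is encoded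
by a locally integrable a.e. derivative `D`; hypothesis (ii) is the Fourier-side Duhamel
representation with `‖G(ξ,τ)‖ ≤ K|ξ|‖u(τ)‖²_{L²}`. -/
theorem NSV_decay_first_bootstrap
    (α ν K rstar : ℝ) (hα : 0 < α) (hν : 0 < ν) (hνα : α ^ 2 < ν) (hK : 0 < K)
    (hrstar : -(3:ℝ)/2 ≤ rstar)
    (F0 : EuclideanSpace ℝ (Fin 3) → EuclideanSpace ℂ (Fin 3))
    (hH10 : Integrable (fun ξ : EuclideanSpace ℝ (Fin 3) => (1 + ‖ξ‖ ^ 2) * ‖F0 ξ‖ ^ 2))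
    (hdiv : ∀ᵐ ξ ∂(volume : Measure (EuclideanSpace ℝ (Fin 3))),
      (∑ i : Fin 3, (ξ i : ℂ) * F0 ξ i) = 0)
    (hchar : rstar ≠ -(3:ℝ)/2 → ∃ c : ℝ, ∀ᶠ ρ in 𝓝[>] (0:ℝ),
      ρ ^ (-(2 * rstar) - 3) *
        (∫ ξ in closedBall (0 : EuclideanSpace ℝ (Fin 3)) ρ, ‖F0 ξ‖ ^ 2) ≤ c)
    (Uhat : ℝ → EuclideanSpace ℝ (Fin 3) → EuclideanSpace ℂ (Fin 3))
    (hU0 : ∀ᵐ ξ ∂(volume : Measure (EuclideanSpace ℝ (Fin 3))), Uhat 0 ξ = F0 ξ)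
    (hUH1 : ∀ t : ℝ, 0 ≤ t →
      Integrable (fun ξ : EuclideanSpace ℝ (Fin 3) => (1 + ‖ξ‖ ^ 2) * ‖Uhat t ξ‖ ^ 2))
    (D : ℝ → ℝ)
    (hDint : ∀ t : ℝ, 0 ≤ t → IntervalIntegrable D volume 0 t)
    (hE : ∀ t : ℝ, 0 ≤ t →
      (∫ ξ : EuclideanSpace ℝ (Fin 3), (1 + α ^ 2 * ‖ξ‖ ^ 2) * ‖Uhat t ξ‖ ^ 2)
        = (∫ ξ : EuclideanSpace ℝ (Fin 3), (1 + α ^ 2 * ‖ξ‖ ^ 2) * ‖Uhat 0 ξ‖ ^ 2)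
          + ∫ s in (0:ℝ)..t, D s)
    (hEderiv : ∀ᵐ s ∂(volume.restrict (Set.Ioi (0:ℝ))),
      D s ≤ -(2 * ν) * ∫ ξ : EuclideanSpace ℝ (Fin 3), ‖ξ‖ ^ 2 * ‖Uhat s ξ‖ ^ 2)
    (G : EuclideanSpace ℝ (Fin 3) → ℝ → EuclideanSpace ℂ (Fin 3))
    (hGmeas : StronglyMeasurable (Function.uncurry G))
    (hGbound : ∀ ξ : EuclideanSpace ℝ (Fin 3), ∀ τ : ℝ,
      ‖G ξ τ‖ ≤ K * ‖ξ‖ * ∫ η : EuclideanSpace ℝ (Fin 3), ‖Uhat τ η‖ ^ 2)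
    (hL2loc : ∀ t : ℝ, 0 ≤ t →
      IntervalIntegrable (fun τ => ∫ η : EuclideanSpace ℝ (Fin 3), ‖Uhat τ η‖ ^ 2)
        volume 0 t)
    (hDuhamel : ∀ t : ℝ, 0 ≤ t → ∀ᵐ ξ ∂(volume : Measure (EuclideanSpace ℝ (Fin 3))),
      Uhat t ξ = Real.exp (t * (-(ν * ‖ξ‖ ^ 2) / (1 + α ^ 2 * ‖ξ‖ ^ 2))) • F0 ξ
        - ∫ τ in (0:ℝ)..t,
            Real.exp ((t - τ) * (-(ν * ‖ξ‖ ^ 2) / (1 + α ^ 2 * ‖ξ‖ ^ 2))) • G ξ τ) :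
    ∃ C₁ > (0:ℝ), ∃ C₂ > (0:ℝ), ∀ t > (0:ℝ),
      (∫ ξ : EuclideanSpace ℝ (Fin 3), (1 + α ^ 2 * ‖ξ‖ ^ 2) * ‖Uhat t ξ‖ ^ 2)
        ≤ C₁ * (C₂ + t) ^ (-(min (3/2 + rstar) (1/2))) := by
  have hF := integrable_of_one_add_norm_sq_mul hH10
  obtain ⟨C₁, hC₁, C₂, hC₂, h⟩ := NSV_decay_first_bootstrap_general (κ := min (3/2 + rstar) (1/2))
    (α := α) hν hK.le hF (by simpa using isBigO_setIntegral_closedBall_of_decayCharacter hF hchar)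
    hUH1 hDint hE hEderiv hL2loc
    (fun t ht => (hDuhamel t ht).mono fun ξ hξ => norm_le_of_duhamel
      (voigtSymbol_nonpos hν.le) ht ((hL2loc t ht).const_mul _) (hGbound ξ) hξ)
    (by norm_num)
  exact ⟨C₁, hC₁, C₂, hC₂, fun t ht => h t ht.le⟩
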